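/- Define for γ a parameter H(x,y) := (y−x)² − 2γ²(y+x) + γ⁴ and P(a,b,c,d) := (d+b)(c+a)/2 − a·c − b·d − γ²(a+b+c+d) + 3γ⁴. Let u : ℤ → ℝ → ℝ satisfy u' = H(u₋₁,u)H(u,u₁)(u₂−u₋₂)/(P(u₋₂,u₋₁,u,u₁)P(u₋₁,u,u₁,u₂)) at every site, with P nonvanishing along the solution. Then w(n,t) := H(u(n),u(n+1))/P(u(n−1),u(n),u(n+1),u(n+2)) − 1 satisfies w' = (w+1)( w₂(1/w₁+1)w − w(1/w₋₁+1)w₋₂ + w₁ − w₋₁ ), wherever w₁, w₋₁ ≠ 0. -/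

import Mathlib

/-- The discriminant polynomial of the rational case, with `k = γ ^ 2`. -/
def discrPoly (k x y : ℝ) : ℝ := (y - x) ^ 2 - 2 * k * (y + x) + k ^ 2

/-- The quad polynomial of the rational case, with `k = γ ^ 2`. -/
noncomputable def quadPoly (k a b c d : ℝ) : ℝ :=
  (d + b) * (c + a) / 2 - a * c - b * d - k * (a + b + c + d) + 3 * k ^ 2

/-- The shifted second difference; products of two of these are `discrPoly - quadPoly`,
up to a factor `-2`. -/
noncomputable def shiftedDiff (k a b c : ℝ) : ℝ := b - (a + c) / 2 + k

theorem quadPoly_reverse (k a b c d : ℝ) : quadPoly k d c b a = quadPoly k a b c d := by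
  unfold quadPoly; ring

theorem discrPoly_symm (k x y : ℝ) : discrPoly k y x = discrPoly k x y := by
  unfold discrPoly; ring

theorem shiftedDiff_reverse (k a b c : ℝ) : shiftedDiff k c b a = shiftedDiff k a b c := by
  unfold shiftedDiff; ring

theorem discrPoly_div_quadPoly_sub_one {k a b c d : ℝ} (h : quadPoly k a b c d ≠ 0) :
    discrPoly k b c / quadPoly k a b c d - 1 =
      -2 * shiftedDiff k a b c * shiftedDiff k b c d / quadPoly k a b c d := by
  rw [div_sub_one h]
  congr 1
  unfold discrPoly quadPoly shiftedDiff
  ring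

theorem quadPoly_forward_identity (k a b c d e f : ℝ) :
    (quadPoly k a b c d * (2 * (c - b) - 2 * k)
          + discrPoly k b c * shiftedDiff k b a d) * (e - a) * quadPoly k c d e f
        + quadPoly k a b c d * shiftedDiff k a b c * discrPoly k d e * (f - b) =
      quadPoly k a b c d * (-2 * shiftedDiff k a b c * shiftedDiff k d e f * quadPoly k b c d e
          + quadPoly k a b c d * quadPoly k c d e f)
        - discrPoly k a b * quadPoly k b c d e * quadPoly k c d e f := by
  unfold discrPoly quadPoly shiftedDiff
  ring

theorem forward_half {k a b c d e f : ℝ} (h0 : quadPoly k a b c d ≠ 0)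
    (h1 : quadPoly k b c d e ≠ 0) (h2 : quadPoly k c d e f ≠ 0) :
    ((quadPoly k a b c d * (2 * (c - b) - 2 * k) + discrPoly k b c * shiftedDiff k b a d)
          * (discrPoly k b c * discrPoly k c d * (e - a)
            / (quadPoly k a b c d * quadPoly k b c d e))
        + discrPoly k b c * shiftedDiff k a b c
          * (discrPoly k c d * discrPoly k d e * (f - b)
            / (quadPoly k b c d e * quadPoly k c d e f))) / quadPoly k a b c d ^ 2 =
      discrPoly k b c / quadPoly k a b c d * (discrPoly k c d / quadPoly k b c d e
          - 2 * shiftedDiff k a b c * shiftedDiff k d e f * discrPoly k c d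
            / (quadPoly k a b c d * quadPoly k c d e f))
        - discrPoly k a b * discrPoly k b c * discrPoly k c d / quadPoly k a b c d ^ 3 := by
  have key := quadPoly_forward_identity k a b c d e f
  generalize quadPoly k a b c d = P0 at *
  generalize quadPoly k b c d e = P1 at *
  generalize quadPoly k c d e f = P2 at *
  generalize discrPoly k a b = Ha at *
  generalize discrPoly k b c = H0 at *
  generalize discrPoly k c d = H1 at *
  generalize discrPoly k d e = H2 at *
  generalize shiftedDiff k a b c = S0 at *
  generalize shiftedDiff k d e f = S3 at *
  generalize shiftedDiff k b a d = S at *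
  field_simp
  linear_combination H0 * H1 * key

theorem backward_half {k x y a b c d : ℝ} (h0 : quadPoly k a b c d ≠ 0)
    (h1 : quadPoly k y a b c ≠ 0) (h2 : quadPoly k x y a b ≠ 0) :
    ((quadPoly k a b c d * (-2 * (c - b) - 2 * k) + discrPoly k b c * shiftedDiff k a d c)
          * (discrPoly k a b * discrPoly k b c * (d - y)
            / (quadPoly k y a b c * quadPoly k a b c d))
        + discrPoly k b c * shiftedDiff k b c d
          * (discrPoly k y a * discrPoly k a b * (c - x)
            / (quadPoly k x y a b * quadPoly k y a b c))) / quadPoly k a b c d ^ 2 =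
      -(discrPoly k b c / quadPoly k a b c d * (discrPoly k a b / quadPoly k y a b c
          - 2 * shiftedDiff k b c d * shiftedDiff k x y a * discrPoly k a b
            / (quadPoly k a b c d * quadPoly k x y a b))
        - discrPoly k a b * discrPoly k b c * discrPoly k c d / quadPoly k a b c d ^ 3) := by
  rw [← quadPoly_reverse] at h0 h1 h2
  have key := forward_half h0 h1 h2
  rw [quadPoly_reverse k a b c d, quadPoly_reverse k y a b c, quadPoly_reverse k x y a b,
    discrPoly_symm k c d, discrPoly_symm k b c, discrPoly_symm k a b, discrPoly_symm k y a,
    shiftedDiff_reverse k b c d, shiftedDiff_reverse k x y a, shiftedDiff_reverse k a d c] at key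
  linear_combination -key

theorem hasDerivAt_discrPoly_div_quadPoly {k t : ℝ} {a b c d : ℝ → ℝ} {a' b' c' d' : ℝ}
    (ha : HasDerivAt a a' t) (hb : HasDerivAt b b' t) (hc : HasDerivAt c c' t)
    (hd : HasDerivAt d d' t) (h0 : quadPoly k (a t) (b t) (c t) (d t) ≠ 0) :
    HasDerivAt (fun s => discrPoly k (b s) (c s) / quadPoly k (a s) (b s) (c s) (d s))
      (((quadPoly k (a t) (b t) (c t) (d t) * (2 * (c t - b t) - 2 * k)
              + discrPoly k (b t) (c t) * shiftedDiff k (b t) (a t) (d t)) * c'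
            + discrPoly k (b t) (c t) * shiftedDiff k (a t) (b t) (c t) * d')
          / quadPoly k (a t) (b t) (c t) (d t) ^ 2
        + ((quadPoly k (a t) (b t) (c t) (d t) * (-2 * (c t - b t) - 2 * k)
              + discrPoly k (b t) (c t) * shiftedDiff k (a t) (d t) (c t)) * b'
            + discrPoly k (b t) (c t) * shiftedDiff k (b t) (c t) (d t) * a')
          / quadPoly k (a t) (b t) (c t) (d t) ^ 2) t := by
  have hH : HasDerivAt (fun s => discrPoly k (b s) (c s))
      (2 * (c t - b t) * (c' - b') - 2 * k * (c' + b')) t := by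
    have h := (((hc.sub hb).pow 2).sub ((hc.add hb).const_mul (2 * k))).add_const (k ^ 2)
    refine h.congr_deriv ?_
    simp
  have hP : HasDerivAt (fun s => quadPoly k (a s) (b s) (c s) (d s))
      (-(shiftedDiff k (b t) (c t) (d t) * a' + shiftedDiff k (a t) (d t) (c t) * b'
        + shiftedDiff k (b t) (a t) (d t) * c' + shiftedDiff k (a t) (b t) (c t) * d')) t := by
    have h := ((((((hd.add hb).mul (hc.add ha)).div_const 2).sub (ha.mul hc)).sub
      (hb.mul hd)).sub ((((ha.add hb).add hc).add hd).const_mul k)).add_const (3 * k ^ 2)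
    refine h.congr_deriv ?_
    simp only [shiftedDiff, Pi.add_apply]
    ring
  refine (hH.fun_div hP h0).congr_deriv ?_
  rw [← add_div]
  congr 1
  ring

/-- The right-hand side of the universal equation in terms of the factors of the substitution. -/
theorem universal_rhs_eq {H0 H1 Hm P0 P1 P2 Pm Pmm S0 S1 S2 S3 Sm Smm : ℝ}
    (hP0 : P0 ≠ 0) (hP1 : P1 ≠ 0) (hP2 : P2 ≠ 0) (hPm : Pm ≠ 0) (hPmm : Pmm ≠ 0)
    (e0 : H0 / P0 - 1 = -2 * S0 * S1 / P0) (e1 : H1 / P1 - 1 = -2 * S1 * S2 / P1)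
    (em : Hm / Pm - 1 = -2 * Sm * S0 / Pm)
    (h1 : H1 / P1 - 1 ≠ 0) (hm : Hm / Pm - 1 ≠ 0) :
    (H0 / P0 - 1 + 1) * (-2 * S2 * S3 / P2 * (1 / (H1 / P1 - 1) + 1) * (H0 / P0 - 1)
        - (H0 / P0 - 1) * (1 / (Hm / Pm - 1) + 1) * (-2 * Smm * Sm / Pmm)
        + (H1 / P1 - 1) - (Hm / Pm - 1)) =
      H0 / P0 * (H1 / P1 - 2 * S0 * S3 * H1 / (P0 * P2))
        - H0 / P0 * (Hm / Pm - 2 * S1 * Smm * Hm / (P0 * Pmm)) := by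
  have f1 : 1 / (H1 / P1 - 1) + 1 = H1 / P1 / (-2 * S1 * S2 / P1) := by
    rw [← e1, div_add_one h1, add_sub_cancel]
  have fm : 1 / (Hm / Pm - 1) + 1 = Hm / Pm / (-2 * Sm * S0 / Pm) := by
    rw [← em, div_add_one hm, add_sub_cancel]
  rw [e1] at h1
  rw [em] at hm
  have hS1 : S1 ≠ 0 := by rintro rfl; simp at h1
  have hS2 : S2 ≠ 0 := by rintro rfl; simp at h1
  have hSm : Sm ≠ 0 := by rintro rfl; simp at hm
  have hS0 : S0 ≠ 0 := by rintro rfl; simp at hm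
  rw [sub_add_cancel, f1, fm, e0]
  field_simp
  ring

/-- The substitution w = H/P − 1 maps solutions of the rational case (Qut-rat) of
the lattice equation (HPut) to solutions of the universal equation (wt). -/
theorem stmt15 (γ : ℝ)
    (H : ℝ → ℝ → ℝ) (P : ℝ → ℝ → ℝ → ℝ → ℝ)
    (hH : ∀ x y, H x y = (y - x) ^ 2 - 2 * γ ^ 2 * (y + x) + γ ^ 4)
    (hP : ∀ a b c d, P a b c d = (d + b) * (c + a) / 2 - a * c - b * d
      - γ ^ 2 * (a + b + c + d) + 3 * γ ^ 4)
    (u : ℤ → ℝ → ℝ)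
    (hPne : ∀ (n : ℤ) (t : ℝ),
      P (u (n - 1) t) (u n t) (u (n + 1) t) (u (n + 2) t) ≠ 0)
    (hu : ∀ (n : ℤ) (t : ℝ), HasDerivAt (u n)
      (H (u (n - 1) t) (u n t) * H (u n t) (u (n + 1) t)
          * (u (n + 2) t - u (n - 2) t)
        / (P (u (n - 2) t) (u (n - 1) t) (u n t) (u (n + 1) t)
          * P (u (n - 1) t) (u n t) (u (n + 1) t) (u (n + 2) t))) t)
    (w : ℤ → ℝ → ℝ)
    (hw : ∀ (n : ℤ) (t : ℝ), w n t = H (u n t) (u (n + 1) t)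
      / P (u (n - 1) t) (u n t) (u (n + 1) t) (u (n + 2) t) - 1)
    (n : ℤ) (t : ℝ) (h1 : w (n + 1) t ≠ 0) (hm1 : w (n - 1) t ≠ 0) :
    HasDerivAt (w n)
      ((w n t + 1) * (w (n + 2) t * (1 / w (n + 1) t + 1) * w n t
        - w n t * (1 / w (n - 1) t + 1) * w (n - 2) t
        + w (n + 1) t - w (n - 1) t)) t := by
  obtain rfl : H = discrPoly (γ ^ 2) := by
    funext x y; rw [hH, discrPoly]; ring
  obtain rfl : P = quadPoly (γ ^ 2) := by
    funext a b c d; rw [hP, quadPoly]; ring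
  have p0 := hPne n t
  have p1 := hPne (n + 1) t
  have p2 := hPne (n + 2) t
  have pm := hPne (n - 1) t
  have pmm := hPne (n - 2) t
  have va := hu (n - 1) t
  have vb := hu n t
  have vc := hu (n + 1) t
  have vd := hu (n + 2) t
  have w1 := hw (n + 1) t
  have w2 := hw (n + 2) t
  have wm := hw (n - 1) t
  have wmm := hw (n - 2) t
  simp only [show n + 1 - 1 = n by ring, show n + 1 + 1 = n + 2 by ring,
    show n + 1 + 2 = n + 3 by ring, show n + 1 - 2 = n - 1 by ring,
    show n + 2 - 1 = n + 1 by ring, show n + 2 + 1 = n + 3 by ring,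
    show n + 2 + 2 = n + 4 by ring, show n + 2 - 2 = n by ring,
    show n - 1 - 1 = n - 2 by ring, show n - 1 + 1 = n by ring,
    show n - 1 + 2 = n + 1 by ring, show n - 1 - 2 = n - 3 by ring,
    show n - 2 - 1 = n - 3 by ring, show n - 2 + 1 = n - 1 by ring,
    show n - 2 + 2 = n by ring] at p1 p2 pm pmm va vc vd w1 w2 wm wmm
  rw [w1] at h1
  rw [wm] at hm1
  have hder := (hasDerivAt_discrPoly_div_quadPoly va vb vc vd p0).sub_const 1
  rw [forward_half p0 p1 p2, backward_half p0 pm pmm] at hder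
  rw [show w n = _ from funext (hw n)]
  refine hder.congr_deriv ?_
  rw [w1, w2, wm, wmm, discrPoly_div_quadPoly_sub_one p2, discrPoly_div_quadPoly_sub_one pmm,
    universal_rhs_eq p0 p1 p2 pm pmm (discrPoly_div_quadPoly_sub_one p0)
      (discrPoly_div_quadPoly_sub_one p1) (discrPoly_div_quadPoly_sub_one pm) h1 hm1]
  ring
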